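/- arXiv:2004.06712 — 2 statements merged into one kernel-verified Lean document; each statement's English description precedes it below -/
import Mathlib

section
/- For every d ∈ ℕ there exist a constant χ_d > 0, a family of positive reals (a_k)_{k ∈ ℕ₀^d} with ∑_k a_k = 1, and a function m : ℕ → ℕ with the following property: for every σ-finite measure space (Ω, 𝒜, μ) and any commuting positive linear contractions T₁,…,T_d of L¹(μ), the operator S = ∑_{k ∈ ℕ₀^d} a_k T₁^{k₁}⋯T_d^{k_d} (the series converging in operator norm on L¹) is a positive contraction of L¹(μ) satisfying, for every n ≥ 1 and every f ∈ L¹(μ) with f ≥ 0 a.e., the pointwise a.e. inequality (1/n^d) ∑_{i₁=0}^{n−1} ⋯ ∑_{i_d=0}^{n−1} T₁^{i₁}⋯T_d^{i_d} f ≤ (χ_d / m(n)) ∑_{j=0}^{m(n)−1} S^j f. -/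
open MeasureTheory Filter Set ENNReal Topology
noncomputable def bb (α : ℝ) (y : ℕ) : ℝ := ((y:ℝ)+1)^(-α) - ((y:ℝ)+2)^(-α)

lemma bern {α x : ℝ} (h0 : 0 ≤ α) (h1 : α ≤ 1) (hx : 1 ≤ x) :
    (x - 1)^α ≤ x^α * (1 - α / x) := by
  have hx0 : 0 < x := by linarith
  have h := rpow_one_add_le_one_add_mul_self (s := -(1/x)) (by
    rw [neg_le_neg_iff, div_le_one hx0]; exact hx) h0 h1
  have e : x - 1 = x * (1 + -(1/x)) := by field_simp; ring
  have hn : 0 ≤ 1 + -(1/x) := by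
    have : 1/x ≤ 1 := by rw [div_le_one hx0]; exact hx
    linarith
  rw [e, Real.mul_rpow hx0.le hn]
  apply mul_le_mul_of_nonneg_left _ (by positivity)
  calc _ ≤ _ := h
    _ = _ := by ring

lemma bb_lower {α : ℝ} (h0 : 0 < α) (h1 : α ≤ 1) (y : ℕ) :
    α * ((y:ℝ)+2)^(-1-α) ≤ bb α y := by
  unfold bb
  have e1 : ((y:ℝ)+1) = ((y:ℝ)+2) - 1 := by ring
  rw [e1]
  set x : ℝ := (y:ℝ)+2 with hx
  have hx2 : (2:ℝ) ≤ x := by rw [hx]; linarith [Nat.cast_nonneg (α := ℝ) y]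
  have hx0 : 0 < x := by linarith
  have hb := bern h0.le h1 (by linarith : 1 ≤ x)
  have hx1 : 0 < x - 1 := by linarith
  have hpos : 0 < (x-1)^α := by positivity
  have hxp : 0 < x^α := by positivity
  have e2 : x^(-1-α) = (x^α)⁻¹ * x⁻¹ := by
    rw [show -1-α = -α + -1 by ring, Real.rpow_add hx0, Real.rpow_neg_one, Real.rpow_neg hx0.le]
  rw [e2, Real.rpow_neg hx1.le, Real.rpow_neg hx0.le]
  have hu : α / x < 1 := by rw [div_lt_one hx0]; linarith
  have hu0 : 0 < α / x := by positivity
  have h3 : (x^α)⁻¹ * (1 + α / x) ≤ ((x-1)^α)⁻¹ := by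
    rw [le_inv_comm₀ (by positivity) hpos]
    refine hb.trans ?_
    rw [mul_inv, inv_inv]
    apply mul_le_mul_of_nonneg_left _ hxp.le
    rw [le_inv_comm₀ (by linarith) (by linarith), ]
    rw [← one_div, le_div_iff₀ (by linarith)]
    nlinarith
  have : (x^α)⁻¹ * (1 + α / x) = (x^α)⁻¹ + α * ((x^α)⁻¹ * x⁻¹) := by
    field_simp
  linarith

lemma bb_pos {α : ℝ} (h0 : 0 < α) (h1 : α ≤ 1) (y : ℕ) : 0 < bb α y :=
  lt_of_lt_of_le (by positivity) (bb_lower h0 h1 y)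

lemma bb_sum_range (α : ℝ) (n : ℕ) :
    ∑ y ∈ Finset.range n, bb α y = 1 - ((n:ℝ)+1)^(-α) := by
  induction n with
  | zero => simp
  | succ n ih => rw [Finset.sum_range_succ, ih, bb]; push_cast; ring_nf

lemma bb_hasSum {α : ℝ} (h0 : 0 < α) (h1 : α ≤ 1) : HasSum (bb α) 1 := by
  rw [hasSum_iff_tendsto_nat_of_nonneg (fun y => (bb_pos h0 h1 y).le)]
  simp_rw [bb_sum_range]
  have h := (tendsto_rpow_neg_atTop h0).comp
    (tendsto_atTop_add_const_right _ (1:ℝ) tendsto_natCast_atTop_atTop)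
  simpa using h.const_sub (1:ℝ)

noncomputable def MM (α : ℝ) (K : ℕ) : ℝ := ∑ t ∈ Finset.range K, ((t:ℝ)+2)^(-α)

lemma MM_mono (α : ℝ) {L K : ℕ} (h : L ≤ K) : MM α L ≤ MM α K := by
  apply Finset.sum_le_sum_of_subset_of_nonneg (by simpa using h)
  intros; positivity

lemma MM_le {α : ℝ} (h0 : 0 < α) (h1 : α ≤ 1/2) (K : ℕ) : MM α K ≤ 2 * (K:ℝ)^(1-α) := by
  induction K with
  | zero => simp [MM]; positivity
  | succ K ih =>
    rw [MM, Finset.sum_range_succ, ← MM]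
    have hb := bern (α := 1-α) (x := (K:ℝ)+1) (by linarith) (by linarith) (by simp)
    have e : ((K:ℝ)+1)^(1-α) * ((1-α)/((K:ℝ)+1)) = (1-α) * ((K:ℝ)+1)^(-α) := by
      rw [show (1-α) = -α + 1 by ring, Real.rpow_add (by positivity), Real.rpow_one]
      field_simp
    have h2 : ((K:ℝ)+2)^(-α) ≤ ((K:ℝ)+1)^(-α) := by
      apply Real.rpow_le_rpow_of_nonpos (by positivity) (by linarith) (by linarith)
    have h3 : 0 < ((K:ℝ)+1)^(-α) := by positivity
    rw [mul_sub, e, add_sub_cancel_right, mul_one] at hb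
    push_cast
    nlinarith

lemma RR (α : ℝ) (L : ℕ) :
    ∑ z ∈ Finset.range L, ((L:ℝ) - z) * bb α z = L - MM α L := by
  induction L with
  | zero => simp [MM]
  | succ L ih =>
    have h := bb_sum_range α (L+1)
    have : ∑ z ∈ Finset.range (L+1), (((L+1:ℕ):ℝ) - z) * bb α z
      = ∑ z ∈ Finset.range (L+1), ((L:ℝ) - z) * bb α z + ∑ z ∈ Finset.range (L+1), bb α z := by
      rw [← Finset.sum_add_distrib]; apply Finset.sum_congr rfl; intros; push_cast; ring
    rw [this, h, Finset.sum_range_succ, ih, MM, MM, Finset.sum_range_succ]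
    push_cast; ring_nf

noncomputable def pp (α : ℝ) (j k : ℕ) : ℝ := PowerSeries.coeff k ((PowerSeries.mk (bb α))^j)

lemma coeff_mul_range (f g : PowerSeries ℝ) (k : ℕ) : PowerSeries.coeff k (f * g)
    = ∑ i ∈ Finset.range (k+1), PowerSeries.coeff i f * PowerSeries.coeff (k-i) g := by
  rw [PowerSeries.coeff_mul, Finset.Nat.sum_antidiagonal_eq_sum_range_succ_mk]

lemma coeff_mul_nonneg {f g : PowerSeries ℝ} (hf : ∀ k, 0 ≤ PowerSeries.coeff k f)
    (hg : ∀ k, 0 ≤ PowerSeries.coeff k g) (k : ℕ) : 0 ≤ PowerSeries.coeff k (f*g) := by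
  rw [coeff_mul_range]
  exact Finset.sum_nonneg fun i _ => mul_nonneg (hf _) (hg _)

lemma coeff_pow_nonneg {f : PowerSeries ℝ} (hf : ∀ k, 0 ≤ PowerSeries.coeff k f)
    (j k : ℕ) : 0 ≤ PowerSeries.coeff k (f^j) := by
  induction j generalizing k with
  | zero => rw [pow_zero, PowerSeries.coeff_one]; split_ifs <;> simp
  | succ j ih => rw [pow_succ]; exact coeff_mul_nonneg ih hf k

lemma pp_nonneg {α : ℝ} (h0 : 0 < α) (h1 : α ≤ 1) (j k : ℕ) : 0 ≤ pp α j k :=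
  coeff_pow_nonneg (fun k => by simpa using (bb_pos h0 h1 k).le) j k

lemma pp_succ (α : ℝ) (j k : ℕ) : pp α (j+1) k
    = ∑ i ∈ Finset.range (k+1), pp α j i * bb α (k-i) := by
  rw [pp, pow_succ, coeff_mul_range]; simp [pp]

lemma pp_sum_le {α : ℝ} (h0 : 0 < α) (h1 : α ≤ 1) (j K : ℕ) :
    ∑ k ∈ Finset.range K, pp α j k ≤ 1 := by
  induction j generalizing K with
  | zero =>
    simp only [pp, pow_zero, PowerSeries.coeff_one]
    rw [Finset.sum_ite_eq' (Finset.range K) 0]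
    split_ifs <;> simp
  | succ j ih =>
    simp_rw [pp_succ]
    rw [Finset.sum_range_diag_flip K (fun a b => pp α j a * bb α b)]
    refine le_trans (Finset.sum_le_sum (g := fun m => pp α j m) ?_) (ih K)
    intro m _
    rw [← Finset.mul_sum, bb_sum_range]
    apply mul_le_of_le_one_right (pp_nonneg h0 h1 _ _)
    have : 0 ≤ (((K-m:ℕ):ℝ)+1)^(-α) := by positivity
    linarith

lemma QQ {α : ℝ} (h0 : 0 < α) (h1 : α ≤ 1) (j K : ℕ) :
    K - j * MM α K ≤ ∑ k ∈ Finset.range K, ((K:ℝ) - k) * pp α j k := by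
  induction j with
  | zero =>
    simp only [pp, pow_zero, PowerSeries.coeff_one, mul_ite, mul_one, mul_zero]
    rw [Finset.sum_ite_eq' (Finset.range K) 0]
    split_ifs with h
    · simp
    · simp at h; simp [h]
  | succ j ih =>
    have e : ∑ k ∈ Finset.range K, ((K:ℝ) - k) * pp α (j+1) k
      = ∑ m ∈ Finset.range K, ∑ k ∈ Finset.range (K-m), ((K:ℝ) - m - k) * (pp α j m * bb α k) := by
      rw [← Finset.sum_range_diag_flip K (fun m k => ((K:ℝ) - m - k) * (pp α j m * bb α k))]
      apply Finset.sum_congr rfl; intro k hk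
      rw [pp_succ, Finset.mul_sum]
      apply Finset.sum_congr rfl; intro i hi
      rw [Finset.mem_range] at hi
      rw [Nat.cast_sub (by omega)]; ring
    rw [e]
    have h2 : ∑ m ∈ Finset.range K, (((K:ℝ) - m) * pp α j m - MM α K * pp α j m) ≤ ∑ m ∈ Finset.range K, ∑ k ∈ Finset.range (K-m), ((K:ℝ) - m - k) * (pp α j m * bb α k) := by
      apply Finset.sum_le_sum; intro m hm
      rw [Finset.mem_range] at hm
      have h3 := RR α (K-m)
      rw [Nat.cast_sub hm.le] at h3
      have : ∑ k ∈ Finset.range (K-m), ((K:ℝ) - m - k) * (pp α j m * bb α k)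
        = pp α j m * ((K:ℝ) - m - MM α (K-m)) := by
        rw [← h3, Finset.mul_sum]
        apply Finset.sum_congr rfl; intros; ring
      rw [this]
      have := MM_mono α (Nat.sub_le K m)
      nlinarith [pp_nonneg h0 h1 j m]
    refine le_trans ?_ h2
    rw [Finset.sum_sub_distrib, ← Finset.mul_sum]
    have h5 := pp_sum_le h0 h1 j K
    have h6 : 0 ≤ MM α K := Finset.sum_nonneg (by intros; positivity)
    push_cast
    nlinarith

lemma half {α : ℝ} (h0 : 0 < α) (h1 : α ≤ 1/2) (j K : ℕ) (hK : 0 < K)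
    (hj : 4 * (j:ℝ) ≤ (K:ℝ)^α) : 1/2 ≤ ∑ k ∈ Finset.range K, pp α j k := by
  have hQ := QQ h0 (by linarith) j K
  have hM := MM_le h0 h1 K
  have hK' : (0:ℝ) < K := by exact_mod_cast hK
  have h2 : ∑ k ∈ Finset.range K, ((K:ℝ) - k) * pp α j k ≤ K * ∑ k ∈ Finset.range K, pp α j k := by
    rw [Finset.mul_sum]
    apply Finset.sum_le_sum; intro k _
    apply mul_le_mul_of_nonneg_right _ (pp_nonneg h0 (by linarith) _ _)
    simp
  have h3 : (j:ℝ) * MM α K ≤ K / 2 := by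
    have e : (K:ℝ)^α * (K:ℝ)^(1-α) = K := by
      rw [← Real.rpow_add hK']; simp
    have : 0 < (K:ℝ)^(1-α) := by positivity
    calc (j:ℝ) * MM α K ≤ j * (2 * (K:ℝ)^(1-α)) := by gcongr
      _ = (4 * j) * (K:ℝ)^(1-α) / 2 := by ring
      _ ≤ (K:ℝ)^α * (K:ℝ)^(1-α) / 2 := by gcongr
      _ = K/2 := by rw [e]
  by_contra hc
  push Not at hc
  nlinarith

/-- one big jump -/
lemma big_jump {s g : PowerSeries ℝ} (hs : ∀ k, 0 ≤ PowerSeries.coeff k s)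
    (hg : ∀ k, 0 ≤ PowerSeries.coeff k g) (j k : ℕ) :
    ((j:ℝ)+1) * PowerSeries.coeff k (s^j * g) ≤ PowerSeries.coeff k ((s+g)^(j+1)) := by
  have hsg : ∀ k, 0 ≤ PowerSeries.coeff k (s+g) := fun k => by
    rw [map_add]; exact add_nonneg (hs k) (hg k)
  have mono : ∀ j k, PowerSeries.coeff k (s^j) ≤ PowerSeries.coeff k ((s+g)^j) := by
    intro j
    induction j with
    | zero => simp
    | succ j ih =>
      intro k
      rw [pow_succ, pow_succ, coeff_mul_range, coeff_mul_range]
      apply Finset.sum_le_sum; intro i _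
      apply mul_le_mul (ih i) _ (hs _) (coeff_pow_nonneg hsg _ _)
      rw [map_add]; linarith [hg (k-i)]
  induction j generalizing k with
  | zero => simp; exact hs k
  | succ j ih =>
    rw [pow_succ (s+g) (j+1), mul_add, map_add]
    have a1 : PowerSeries.coeff k (s^(j+1) * g) ≤ PowerSeries.coeff k ((s+g)^(j+1) * g) := by
      rw [coeff_mul_range, coeff_mul_range]
      apply Finset.sum_le_sum; intro i _
      exact mul_le_mul_of_nonneg_right (mono _ _) (hg _)
    have a2 : ((j:ℝ)+1) * PowerSeries.coeff k (s^(j+1) * g) ≤ PowerSeries.coeff k ((s+g)^(j+1) * s) := by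
      rw [show s^(j+1) * g = (s^j * g) * s by ring, coeff_mul_range, coeff_mul_range, Finset.mul_sum]
      apply Finset.sum_le_sum; intro i _
      rw [← mul_assoc]
      exact mul_le_mul_of_nonneg_right (ih _) (hs _)
    push_cast
    linarith

lemma trunc_pow_coeff (f : PowerSeries ℝ) (K j k : ℕ) (hk : k < K) :
    PowerSeries.coeff k (((PowerSeries.trunc K f : Polynomial ℝ) : PowerSeries ℝ)^j)
      = PowerSeries.coeff k (f^j) := by
  have h := PowerSeries.trunc_trunc_pow f K j
  have := congrArg (fun p => Polynomial.coeff p k) h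
  simpa only [PowerSeries.coeff_trunc, if_pos hk, ← Polynomial.coe_pow, Polynomial.coeff_coe] using this

lemma pp_lower0 {α : ℝ} (h0 : 0 < α) (h1 : α ≤ 1/2) (j k : ℕ) (hk : 1 ≤ k)
    (hj : 12 * (j:ℝ) ≤ ((k:ℝ)+1)^α) :
    ((j:ℝ)+1) * (α / 2 * ((k:ℝ)+2)^(-1-α)) ≤ pp α (j+1) k := by
  obtain ⟨K, hK⟩ : ∃ K, K = (k+1)/2 := ⟨_, rfl⟩
  have hK0 : 0 < K := by omega
  have hK3 : k + 1 ≤ 3 * K := by omega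
  have hK2 : 2 * K ≤ k + 1 := by omega
  have hb : ∀ k, 0 ≤ bb α k := fun k => (bb_pos h0 (by linarith) k).le
  have hKα : ((k:ℝ)+1)^α ≤ 3 * (K:ℝ)^α := by
    have : ((k:ℝ)+1) ≤ 3 * K := by exact_mod_cast hK3
    calc ((k:ℝ)+1)^α ≤ (3 * (K:ℝ))^α := by gcongr
      _ = 3^α * (K:ℝ)^α := by rw [Real.mul_rpow (by norm_num) (by positivity)]
      _ ≤ 3 * (K:ℝ)^α := by
        gcongr
        calc (3:ℝ)^α ≤ 3^(1:ℝ) := by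
              apply Real.rpow_le_rpow_of_exponent_le <;> linarith
          _ = 3 := by simp
  have hh := half h0 h1 j K hK0 (by linarith)
  set B := PowerSeries.mk (bb α) with hB
  set s : PowerSeries ℝ := ((PowerSeries.trunc K B : Polynomial ℝ) : PowerSeries ℝ) with hs
  set g : PowerSeries ℝ := PowerSeries.mk (fun y => if y < K then 0 else bb α y) with hg
  have hsg : s + g = B := by
    ext y
    simp only [hs, hg, hB, map_add, Polynomial.coeff_coe, PowerSeries.coeff_trunc, PowerSeries.coeff_mk]
    split_ifs <;> simp
  have hs0 : ∀ k, 0 ≤ PowerSeries.coeff k s := by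
    intro y
    simp only [hs, hB, Polynomial.coeff_coe, PowerSeries.coeff_trunc, PowerSeries.coeff_mk]
    split_ifs
    · exact hb y
    · exact le_rfl
  have hg0 : ∀ k, 0 ≤ PowerSeries.coeff k g := by
    intro y
    simp only [hg, PowerSeries.coeff_mk]
    split_ifs
    · exact le_rfl
    · exact hb y
  have main := big_jump hs0 hg0 j k
  rw [hsg] at main
  refine le_trans (mul_le_mul_of_nonneg_left ?_ (by positivity)) main
  rw [coeff_mul_range]
  have h2 : ∑ i ∈ Finset.range K, pp α j i * (α * ((k:ℝ)+2)^(-1-α)) ≤ ∑ i ∈ Finset.range (k+1), PowerSeries.coeff i (s^j) * PowerSeries.coeff (k-i) g := by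
    refine le_trans (Finset.sum_le_sum (g := fun i => PowerSeries.coeff i (s^j) * PowerSeries.coeff (k-i) g) ?_) (Finset.sum_le_sum_of_subset_of_nonneg ?_ ?_)
    · intro i hi
      rw [Finset.mem_range] at hi
      rw [hs, trunc_pow_coeff B K j i hi]
      apply mul_le_mul_of_nonneg_left _ (pp_nonneg h0 (by linarith) j i)
      simp only [hg, PowerSeries.coeff_mk]
      rw [if_neg (by omega)]
      refine le_trans ?_ (bb_lower h0 (by linarith) (k-i))
      apply mul_le_mul_of_nonneg_left _ h0.le
      apply Real.rpow_le_rpow_of_nonpos (by positivity) _ (by linarith)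
      have : ((k-i:ℕ):ℝ) ≤ k := by exact_mod_cast Nat.sub_le k i
      linarith
    · intro x; simp; omega
    · intro i _ _
      exact mul_nonneg (coeff_pow_nonneg hs0 _ _) (hg0 _)
  refine le_trans ?_ h2
  rw [← Finset.sum_mul]
  have : 0 ≤ α * ((k:ℝ)+2)^(-1-α) := by positivity
  nlinarith

lemma pp_lower {α : ℝ} (h0 : 0 < α) (h1 : α ≤ 1/2) (j k : ℕ)
    (hj : 12 * (j:ℝ) ≤ ((k:ℝ)+1)^α) :
    ((j:ℝ)+1) * (α / 8 * ((k:ℝ)+1)^(-1-α)) ≤ pp α (j+1) k := by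
  have hc : ((k:ℝ)+1)^(-1-α) ≤ 4 * ((k:ℝ)+2)^(-1-α) := by
    have e : (2:ℝ)^(-1-α) * ((k:ℝ)+1)^(-1-α) ≤ ((k:ℝ)+2)^(-1-α) := by
      rw [← Real.mul_rpow (by norm_num) (by positivity)]
      apply Real.rpow_le_rpow_of_nonpos (by positivity) _ (by linarith)
      linarith [Nat.cast_nonneg (α := ℝ) k]
    have e2 : (1/4:ℝ) ≤ (2:ℝ)^(-1-α) := by
      calc (1/4:ℝ) = (2:ℝ)^(-2:ℝ) := by
            rw [Real.rpow_neg (by norm_num)]; norm_num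
        _ ≤ _ := by apply Real.rpow_le_rpow_of_exponent_le <;> linarith
    have : 0 < ((k:ℝ)+1)^(-1-α) := by positivity
    nlinarith
  rcases Nat.eq_zero_or_pos k with rfl | hk
  · have hj0 : j = 0 := by
      by_contra hne
      have : (1:ℝ) ≤ j := by exact_mod_cast Nat.one_le_iff_ne_zero.mpr hne
      simp at hj
      linarith
    subst hj0
    have h := bb_lower h0 (by linarith) 0
    have e : pp α (0+1) 0 = bb α 0 := by simp [pp]
    rw [e]
    refine le_trans ?_ h
    have : (0:ℝ) < ((0:ℕ):ℝ)+2 := by norm_num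
    have h7 : 0 < (((0:ℕ):ℝ)+2)^(-1-α) := by positivity
    generalize (((0:ℕ):ℝ)+2)^(-1-α) = u at *
    generalize (((0:ℕ):ℝ)+1)^(-1-α) = v at *
    push_cast
    nlinarith [mul_le_mul_of_nonneg_left hc h0.le, mul_pos h0 h7]
  · refine le_trans ?_ (pp_lower0 h0 h1 j k hk hj)
    apply mul_le_mul_of_nonneg_left _ (by positivity)
    nlinarith

lemma sum_pow_lower (D N : ℕ) : (N:ℝ)^(D+1) ≤ ((D:ℝ)+1) * ∑ j ∈ Finset.range N, ((j:ℝ)+1)^D := by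
  induction N with
  | zero => simp
  | succ N ih =>
    rw [Finset.sum_range_succ, mul_add]
    have hx : (0:ℝ) < (N:ℝ)+1 := by positivity
    have h := one_add_mul_le_pow (a := -(1/((N:ℝ)+1))) (by
      have : 1/((N:ℝ)+1) ≤ 1 := by rw [div_le_one hx]; simp
      linarith) (D+1)
    have h2 := mul_le_mul_of_nonneg_left h (pow_nonneg hx.le (D+1))
    rw [← mul_pow] at h2
    have e : ((N:ℝ)+1) * (1 + -(1/((N:ℝ)+1))) = N := by field_simp; ring
    rw [e] at h2
    have e2 : ((N:ℝ)+1)^(D+1) * (1 + ((D+1:ℕ):ℝ) * -(1/((N:ℝ)+1)))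
       = ((N:ℝ)+1)^(D+1) - ((D:ℝ)+1) * ((N:ℝ)+1)^D := by
      push_cast; field_simp; ring
    rw [e2] at h2
    push_cast
    linarith

noncomputable def mm (α : ℝ) (n : ℕ) : ℕ := ⌊(n:ℝ)^α⌋₊ + 2

lemma final_comb (d : ℕ) (α : ℝ) (hα : α = 1 / ((d:ℝ)+2)) : ∃ c : ℝ, 0 < c ∧ ∀ n : ℕ, 1 ≤ n →
    ∀ k : Fin (d+1) → ℕ, (∀ i, k i < n) →
      c * (mm α n : ℝ) * ((n:ℝ)^(d+1))⁻¹ ≤ ∑ j ∈ Finset.range (mm α n), ∏ i, pp α j (k i) := by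
  have h0 : 0 < α := by rw [hα]; positivity
  have h1 : α ≤ 1/2 := by
    rw [hα]; apply one_div_le_one_div_of_le <;> linarith [Nat.cast_nonneg (α := ℝ) d]
  have hαd : α * ((d:ℝ)+2) = 1 := by rw [hα]; field_simp
  have hd2 : (0:ℝ) < (d:ℝ)+2 := by positivity
  refine ⟨(α/8)^(d+1) / (12^(d+2) * ((d:ℝ)+2)) / 3, by positivity, ?_⟩
  intro n hn k hk
  have hn1 : (1:ℝ) ≤ n := by exact_mod_cast hn
  have hn0 : (0:ℝ) < n := by linarith
  obtain ⟨i0, -, hi0⟩ := Finset.exists_min_image Finset.univ k ⟨0, Finset.mem_univ _⟩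
  set s : ℝ := (k i0 : ℝ) + 1 with hs
  have hs0 : 0 < s := by positivity
  have hsn : s ≤ n := by rw [hs]; exact_mod_cast hk i0
  obtain ⟨N, hN⟩ : ∃ N, N = ⌊s^α/12⌋₊ + 1 := ⟨_, rfl⟩
  have hNs : s^α/12 ≤ N := by rw [hN]; push_cast; exact (Nat.lt_floor_add_one _).le
  have hsα : 0 < s^α := by positivity
  have hnα : 1 ≤ (n:ℝ)^α := Real.one_le_rpow hn1 h0.le
  have hNm : N + 1 ≤ mm α n := by
    have : ⌊s^α/12⌋₊ ≤ ⌊(n:ℝ)^α⌋₊ := by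
      apply Nat.floor_le_floor
      have : s^α ≤ (n:ℝ)^α := by gcongr
      linarith
    rw [hN, mm]; omega
  have hm3 : (mm α n : ℝ) ≤ 3 * (n:ℝ)^α := by
    rw [mm]; push_cast
    have := Nat.floor_le (a := (n:ℝ)^α) (by positivity)
    linarith
  set P : ℝ := ∏ i, ((k i : ℝ)+1)^(-1-α) with hP
  have hP0 : 0 < P := Finset.prod_pos fun i _ => by positivity
  -- step 1
  have s1 : ∑ j ∈ Finset.range N, ((j:ℝ)+1)^(d+1) * ((α/8)^(d+1) * P)
      ≤ ∑ j ∈ Finset.range (mm α n), ∏ i, pp α j (k i) := by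
    have : ∑ j ∈ Finset.range N, ((j:ℝ)+1)^(d+1) * ((α/8)^(d+1) * P)
      ≤ ∑ j ∈ Finset.range N, ∏ i, pp α (j+1) (k i) := by
      apply Finset.sum_le_sum; intro j hj
      have hj' : (j:ℝ) ≤ s^α/12 := by
        rw [Finset.mem_range, hN, Nat.lt_succ_iff, Nat.le_floor_iff (by positivity)] at hj
        exact hj
      have e : ((j:ℝ)+1)^(d+1) * ((α/8)^(d+1) * P)
        = ∏ i, (((j:ℝ)+1) * (α / 8 * ((k i:ℝ)+1)^(-1-α))) := by
        rw [Finset.prod_mul_distrib, Finset.prod_mul_distrib, Finset.prod_const, Finset.prod_const, Finset.card_univ, Fintype.card_fin]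
      rw [e]
      apply Finset.prod_le_prod
      · intros; positivity
      · intro i _
        apply pp_lower h0 h1
        have : s^α ≤ ((k i:ℝ)+1)^α := by
          have : (k i0 : ℝ) ≤ k i := by exact_mod_cast hi0 i (Finset.mem_univ _)
          gcongr
          rw [hs]; linarith
        linarith
    refine this.trans ?_
    have hle : ∑ j ∈ Finset.range (N+1), ∏ i, pp α j (k i) ≤ ∑ j ∈ Finset.range (mm α n), ∏ i, pp α j (k i) := by
      apply Finset.sum_le_sum_of_subset_of_nonneg
      · simpa using hNm
      · intro j _ _
        exact Finset.prod_nonneg fun i _ => pp_nonneg h0 (by linarith) _ _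
    refine le_trans ?_ hle
    rw [Finset.sum_range_succ']
    have : 0 ≤ ∏ i, pp α 0 (k i) := Finset.prod_nonneg fun i _ => pp_nonneg h0 (by linarith) _ _
    linarith
  refine le_trans ?_ s1
  rw [← Finset.sum_mul]
  have s2 : s / 12^(d+2) ≤ ((d:ℝ)+2) * ∑ j ∈ Finset.range N, ((j:ℝ)+1)^(d+1) := by
    have h := sum_pow_lower (d+1) N
    have e : s = (s^α)^(d+2) := by
      rw [← Real.rpow_natCast, ← Real.rpow_mul hs0.le]; push_cast; rw [hαd, Real.rpow_one]
    have : s / 12^(d+2) ≤ (N:ℝ)^(d+2) := by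
      conv_lhs => rw [e]
      rw [← div_pow]
      gcongr
    refine this.trans (h.trans (le_of_eq ?_))
    push_cast; ring
  have s3 : (n:ℝ)^α * ((n:ℝ)^(d+1))⁻¹ ≤ s * P := by
    have e1 : s * P = s^(-α) * ∏ i ∈ Finset.univ.erase i0, ((k i : ℝ)+1)^(-1-α) := by
      rw [hP, ← Finset.mul_prod_erase Finset.univ _ (Finset.mem_univ i0), ← mul_assoc, ← hs]
      congr 1
      rw [show -α = 1 + (-1-α) by ring, Real.rpow_add hs0, Real.rpow_one]
    have e2 : (n:ℝ)^α * ((n:ℝ)^(d+1))⁻¹ = (n:ℝ)^(-α) * ∏ i ∈ Finset.univ.erase i0, (n:ℝ)^(-1-α) := by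
      rw [Finset.prod_const, Finset.card_erase_of_mem (Finset.mem_univ _)]
      simp only [Finset.card_univ, Fintype.card_fin, Nat.add_sub_cancel]
      rw [← Real.rpow_natCast, ← Real.rpow_natCast, ← Real.rpow_mul hn0.le, ← Real.rpow_neg hn0.le,
        ← Real.rpow_add hn0, ← Real.rpow_add hn0]
      congr 1
      push_cast
      linear_combination hαd
    rw [e1, e2]
    apply mul_le_mul
    · exact Real.rpow_le_rpow_of_nonpos hs0 hsn (by linarith)
    · apply Finset.prod_le_prod
      · intros; positivity
      · intro i _
        apply Real.rpow_le_rpow_of_nonpos (by positivity) _ (by linarith)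
        exact_mod_cast hk i
    · exact Finset.prod_nonneg fun i _ => by positivity
    · positivity
  set SS := ∑ j ∈ Finset.range N, ((j:ℝ)+1)^(d+1)
  have hSS : s / 12^(d+2) / ((d:ℝ)+2) ≤ SS := by
    rw [div_le_iff₀ hd2]; linarith
  calc (α/8)^(d+1) / (12^(d+2) * ((d:ℝ)+2)) / 3 * (mm α n : ℝ) * ((n:ℝ)^(d+1))⁻¹
      ≤ (α/8)^(d+1) / (12^(d+2) * ((d:ℝ)+2)) / 3 * (3 * (n:ℝ)^α) * ((n:ℝ)^(d+1))⁻¹ := by gcongr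
    _ = (α/8)^(d+1) / (12^(d+2) * ((d:ℝ)+2)) * ((n:ℝ)^α * ((n:ℝ)^(d+1))⁻¹) := by ring
    _ ≤ (α/8)^(d+1) / (12^(d+2) * ((d:ℝ)+2)) * (s * P) := by gcongr
    _ = (s / 12^(d+2) / ((d:ℝ)+2)) * ((α/8)^(d+1) * P) := by field_simp
    _ ≤ SS * ((α/8)^(d+1) * P) := by gcongr

lemma hasSum_pi_prod {b : ℕ → ℝ} (hb : ∀ y, 0 ≤ b y) (h : HasSum b 1) (d : ℕ) :
    HasSum (fun k : Fin d → ℕ => ∏ i, b (k i)) 1 := by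
  induction d with
  | zero =>
    have := hasSum_unique (fun k : Fin 0 → ℕ => ∏ i, b (k i))
    rwa [Fin.prod_univ_zero] at this
  | succ d ih =>
    rw [← (Fin.consEquiv (fun _ : Fin (d+1) => ℕ)).hasSum_iff]
    have hs : Summable (fun x : ℕ × (Fin d → ℕ) => b x.1 * (fun k : Fin d → ℕ => ∏ i, b (k i)) x.2) :=
      Summable.mul_of_nonneg (f := b) (g := fun k : Fin d → ℕ => ∏ i, b (k i))
        h.summable ih.summable hb (fun k => Finset.prod_nonneg fun i _ => hb _)
    have := HasSum.mul (f := b) (g := fun k : Fin d → ℕ => ∏ i, b (k i)) h ih hs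
    rw [mul_one] at this
    have e : ((fun k : Fin (d+1) → ℕ => ∏ i, b (k i)) ∘ (Fin.consEquiv (fun _ : Fin (d+1) => ℕ)))
        = fun x : ℕ × (Fin d → ℕ) => b x.1 * (fun k : Fin d → ℕ => ∏ i, b (k i)) x.2 := by
      ext x
      simp [Fin.consEquiv, Fin.prod_univ_succ]
    rw [e]; exact this

section Ops
variable {E : Type*} [NormedAddCommGroup E] [NormedSpace ℝ E] [PartialOrder E]
  [IsOrderedAddMonoid E] [PosSMulMono ℝ E]

def PosOp (A : E →L[ℝ] E) : Prop := ∀ f, 0 ≤ f → 0 ≤ A f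

lemma PosOp.add {A B : E →L[ℝ] E} (hA : PosOp A) (hB : PosOp B) : PosOp (A + B) :=
  fun f hf => add_nonneg (hA f hf) (hB f hf)

lemma PosOp.mul {A B : E →L[ℝ] E} (hA : PosOp A) (hB : PosOp B) : PosOp (A * B) :=
  fun f hf => hA _ (hB f hf)

lemma PosOp.smul {A : E →L[ℝ] E} {c : ℝ} (hc : 0 ≤ c) (hA : PosOp A) : PosOp (c • A) :=
  fun f hf => smul_nonneg hc (hA f hf)

lemma PosOp.one : PosOp (1 : E →L[ℝ] E) := fun _ hf => hf

lemma PosOp.zero : PosOp (0 : E →L[ℝ] E) := fun _ _ => le_rfl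

lemma PosOp.pow {A : E →L[ℝ] E} (hA : PosOp A) (n : ℕ) : PosOp (A ^ n) := by
  induction n with
  | zero => rw [pow_zero]; exact PosOp.one
  | succ n ih => rw [pow_succ]; exact ih.mul hA

lemma PosOp.sum {ι : Type*} (s : Finset ι) {A : ι → E →L[ℝ] E} (hA : ∀ i ∈ s, PosOp (A i)) :
    PosOp (∑ i ∈ s, A i) := by
  classical
  induction s using Finset.induction_on with
  | empty => simpa using PosOp.zero
  | insert a s ha ih =>
    rw [Finset.sum_insert ha]
    exact (hA a (by simp)).add (ih fun i hi => hA i (by simp [hi]))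

lemma PosOp.list_prod (l : List (E →L[ℝ] E)) (hl : ∀ A ∈ l, PosOp A) : PosOp l.prod := by
  induction l with
  | nil => exact PosOp.one
  | cons a l ih =>
    rw [List.prod_cons]
    exact (hl a (by simp)).mul (ih fun A hA => hl A (by simp [hA]))

variable {A : Type*} [CommRing A] [Algebra ℝ A] (φ : A →ₐ[ℝ] (E →L[ℝ] E))

lemma prod_diff_pos {ι : Type*} (s : Finset ι) (x q : ι → A)
    (hq : ∀ i, PosOp (φ (q i))) (hx : ∀ i, PosOp (φ (x i - q i))) :
    PosOp (φ (∏ i ∈ s, q i)) ∧ PosOp (φ (∏ i ∈ s, x i - ∏ i ∈ s, q i)) := by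
  classical
  induction s using Finset.induction_on with
  | empty => simp only [Finset.prod_empty, sub_self, map_one, map_zero]; exact ⟨PosOp.one, PosOp.zero⟩
  | insert a s ha ih =>
    rw [Finset.prod_insert ha, Finset.prod_insert ha]
    obtain ⟨i1, i2⟩ := ih
    constructor
    · rw [map_mul]; exact (hq a).mul i1
    · have e : x a * ∏ i ∈ s, x i - q a * ∏ i ∈ s, q i
        = (x a - q a) * (∏ i ∈ s, x i - ∏ i ∈ s, q i) + (x a - q a) * ∏ i ∈ s, q i
          + q a * (∏ i ∈ s, x i - ∏ i ∈ s, q i) := by ring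
      rw [e, map_add, map_add, map_mul, map_mul, map_mul]
      exact (((hx a).mul i2).add ((hx a).mul i1)).add ((hq a).mul i2)

lemma one_dim {α : ℝ} (h0 : 0 < α) (h1 : α ≤ 1) (t : A) (ht : PosOp (φ t)) (n j : ℕ) :
    PosOp (φ (∑ y ∈ Finset.range n, pp α j y • t ^ y)) ∧
    PosOp (φ ((∑ y ∈ Finset.range n, bb α y • t ^ y)^j - ∑ y ∈ Finset.range n, pp α j y • t ^ y)) := by
  have htp : ∀ c : ℝ, 0 ≤ c → ∀ y : ℕ, PosOp (φ (c • t^y)) := by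
    intro c hc y
    rw [map_smul, map_pow]
    exact (ht.pow y).smul hc
  refine ⟨?_, ?_⟩
  · rw [map_sum]
    exact PosOp.sum _ fun y _ => htp _ (pp_nonneg h0 h1 j y) y
  set B := PowerSeries.mk (bb α) with hB
  set p := PowerSeries.trunc n B with hp
  have e1 : ∑ y ∈ Finset.range n, bb α y • t ^ y = Polynomial.aeval t p := by
    rw [Polynomial.aeval_eq_sum_range' (n := p.natDegree + 1 + n) (by omega)]
    rw [show p.natDegree + 1 + n = n + (p.natDegree + 1) by ring, Finset.sum_range_add]
    have : ∑ x ∈ Finset.range (p.natDegree+1), p.coeff (n+x) • t^(n+x) = 0 := by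
      apply Finset.sum_eq_zero; intro x _
      rw [hp, PowerSeries.coeff_trunc, if_neg (by omega), zero_smul]
    rw [this, add_zero]
    apply Finset.sum_congr rfl; intro y hy
    rw [Finset.mem_range] at hy
    rw [hp, PowerSeries.coeff_trunc, if_pos hy, hB, PowerSeries.coeff_mk]
  have hc : ∀ y, (p^j).coeff y = PowerSeries.coeff y ((p : PowerSeries ℝ)^j) := by
    intro y; rw [← Polynomial.coe_pow, Polynomial.coeff_coe]
  have hp0 : ∀ y, 0 ≤ PowerSeries.coeff y (p : PowerSeries ℝ) := by
    intro y
    rw [Polynomial.coeff_coe, hp, PowerSeries.coeff_trunc]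
    split_ifs
    · rw [hB, PowerSeries.coeff_mk]; exact (bb_pos h0 h1 y).le
    · exact le_rfl
  rw [e1, ← map_pow, Polynomial.aeval_eq_sum_range' (n := n + ((p^j).natDegree + 1)) (by omega),
    Finset.sum_range_add]
  have e2 : ∑ y ∈ Finset.range n, pp α j y • t ^ y = ∑ y ∈ Finset.range n, (p^j).coeff y • t^y := by
    apply Finset.sum_congr rfl; intro y hy
    rw [Finset.mem_range] at hy
    rw [hc, hp, trunc_pow_coeff B n j y hy, pp]
  rw [e2, add_sub_cancel_left, map_sum]
  apply PosOp.sum; intro y _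
  apply htp
  rw [hc]
  exact coeff_pow_nonneg hp0 _ _

lemma multi_dim {α : ℝ} (h0 : 0 < α) (h1 : α ≤ 1) {d : ℕ} (t : Fin d → A)
    (ht : ∀ i, PosOp (φ (t i))) (n j : ℕ) :
    PosOp (φ (∑ k ∈ Fintype.piFinset (fun _ : Fin d => Finset.range n),
        (∏ i, bb α (k i)) • ∏ i, t i ^ k i) ^ j
      - φ (∑ k ∈ Fintype.piFinset (fun _ : Fin d => Finset.range n),
        (∏ i, pp α j (k i)) • ∏ i, t i ^ k i)) := by
  have key : ∀ c : ℕ → ℝ, ∑ k ∈ Fintype.piFinset (fun _ : Fin d => Finset.range n),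
        (∏ i, c (k i)) • ∏ i, t i ^ k i = ∏ i, ∑ y ∈ Finset.range n, c y • t i ^ y := by
    intro c
    rw [Finset.prod_univ_sum]
    apply Finset.sum_congr rfl; intro k _
    simp only [Algebra.smul_def, Finset.prod_mul_distrib, map_prod]
  rw [key, key, ← map_pow, ← map_sub, ← Finset.prod_pow]
  exact (prod_diff_pos φ Finset.univ _ _ (fun i => (one_dim φ h0 h1 (t i) (ht i) n j).1)
    (fun i => (one_dim φ h0 h1 (t i) (ht i) n j).2)).2

lemma pow_diff_pos {S R : E →L[ℝ] E} (hR : PosOp R) (h : PosOp (S - R)) (j : ℕ) :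
    PosOp (S^j - R^j) := by
  have hS : PosOp S := by simpa using h.add hR
  induction j with
  | zero => simpa using PosOp.zero
  | succ j ih =>
    have e : S^(j+1) - R^(j+1) = (S^j - R^j) * S + R^j * (S - R) := by
      rw [pow_succ, pow_succ, sub_mul, mul_sub]; abel
    rw [e]
    exact (ih.mul hS).add ((hR.pow j).mul h)

end Ops

section Main
variable {E : Type*} [NormedAddCommGroup E] [NormedSpace ℝ E] [PartialOrder E]
  [IsOrderedAddMonoid E] [PosSMulMono ℝ E]

/-- transfer to non commutative products -/
lemma multi_dim' {α : ℝ} (h0 : 0 < α) (h1 : α ≤ 1) {d : ℕ} (T : Fin d → E →L[ℝ] E)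
    (hT : ∀ i, PosOp (T i)) (hc : ∀ i j, Commute (T i) (T j)) (n j : ℕ) :
    PosOp ((∑ k ∈ Fintype.piFinset (fun _ : Fin d => Finset.range n),
        (∏ i, bb α (k i)) • (List.ofFn fun i => T i ^ k i).prod) ^ j
      - ∑ k ∈ Fintype.piFinset (fun _ : Fin d => Finset.range n),
        (∏ i, pp α j (k i)) • (List.ofFn fun i => T i ^ k i).prod) := by
  letI : CommRing (Algebra.adjoin ℝ (Set.range T)) := Algebra.adjoinCommRingOfComm ℝ (by
    rintro _ ⟨i, rfl⟩ _ ⟨j, rfl⟩; exact hc i j)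
  let φ : (Algebra.adjoin ℝ (Set.range T)) →ₐ[ℝ] (E →L[ℝ] E) := (Algebra.adjoin ℝ (Set.range T)).val
  let t : Fin d → Algebra.adjoin ℝ (Set.range T) :=
    fun i => ⟨T i, Algebra.subset_adjoin ⟨i, rfl⟩⟩
  have e : ∀ k : Fin d → ℕ, (List.ofFn fun i => T i ^ k i).prod = φ (∏ i, t i ^ k i) := by
    intro k
    rw [← List.prod_ofFn, map_list_prod, List.map_ofFn]
    rfl
  have := multi_dim φ h0 h1 t hT n j
  simp only [map_sum, map_smul] at this
  simp only [e]
  exact this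

theorem brunel_abs [OrderClosedTopology E] [CompleteSpace E] (d : ℕ) {α : ℝ} (h0 : 0 < α)
    (h1 : α ≤ 1) (c : ℝ) (hc : 0 < c) (m : ℕ → ℕ) (hm : ∀ n, 0 < m n)
    (hcomb : ∀ n : ℕ, 1 ≤ n → ∀ k : Fin d → ℕ, (∀ i, k i < n) →
      c * (m n : ℝ) * ((n:ℝ)^d)⁻¹ ≤ ∑ j ∈ Finset.range (m n), ∏ i, pp α j (k i))
    (T : Fin d → E →L[ℝ] E) (hT1 : ∀ i f, ‖T i f‖ ≤ ‖f‖) (hT : ∀ i f, 0 ≤ f → 0 ≤ T i f)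
    (hcm : ∀ i j, Commute (T i) (T j)) :
    ∃ S : E →L[ℝ] E,
        HasSum (fun k : Fin d → ℕ => (∏ i, bb α (k i)) • (List.ofFn fun i => T i ^ k i).prod) S ∧
        (∀ f : E, ‖S f‖ ≤ ‖f‖) ∧
        (∀ f : E, 0 ≤ f → 0 ≤ S f) ∧
        ∀ n : ℕ, 1 ≤ n → ∀ f : E, 0 ≤ f →
          ((n : ℝ) ^ d)⁻¹ •
              ∑ k ∈ Fintype.piFinset (fun _ : Fin d => Finset.range n),
                (List.ofFn fun i => T i ^ k i).prod f
            ≤ (c⁻¹ / (m n : ℝ)) • ∑ j ∈ Finset.range (m n), (S ^ j) f := by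
  set W : (Fin d → ℕ) → E →L[ℝ] E := fun k => (List.ofFn fun i => T i ^ k i).prod with hW
  set a : (Fin d → ℕ) → ℝ := fun k => ∏ i, bb α (k i) with ha
  have ha0 : ∀ k, 0 ≤ a k := fun k => Finset.prod_nonneg fun i _ => (bb_pos h0 h1 _).le
  have hasum : HasSum a 1 := hasSum_pi_prod (fun y => (bb_pos h0 h1 y).le) (bb_hasSum h0 h1) d
  have hTn : ∀ i, ‖T i‖ ≤ 1 := fun i =>
    ContinuousLinearMap.opNorm_le_bound _ zero_le_one fun f => by simpa using hT1 i f
  have hpow : ∀ (X : E →L[ℝ] E), ‖X‖ ≤ 1 → ∀ n : ℕ, ‖X^n‖ ≤ 1 := by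
    intro X hX n
    induction n with
    | zero => rw [pow_zero]; exact ContinuousLinearMap.norm_id_le
    | succ n ih =>
      rw [pow_succ]
      exact (norm_mul_le _ _).trans (mul_le_one₀ ih (norm_nonneg _) hX)
  have hlist : ∀ l : List (E →L[ℝ] E), (∀ X ∈ l, ‖X‖ ≤ 1) → ‖l.prod‖ ≤ 1 := by
    intro l
    induction l with
    | nil => intro _; exact ContinuousLinearMap.norm_id_le
    | cons x l ih =>
      intro h
      rw [List.prod_cons]
      exact (norm_mul_le _ _).trans (mul_le_one₀ (h x (by simp)) (norm_nonneg _)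
        (ih fun X hX => h X (by simp [hX])))
  have hWn : ∀ k, ‖W k‖ ≤ 1 := by
    intro k
    apply hlist
    intro X hX
    rw [List.mem_ofFn] at hX
    obtain ⟨i, rfl⟩ := hX
    exact hpow _ (hTn i) _
  have hWpos : ∀ k, PosOp (W k) := by
    intro k
    apply PosOp.list_prod
    intro X hX
    rw [List.mem_ofFn] at hX
    obtain ⟨i, rfl⟩ := hX
    exact PosOp.pow (hT i) _
  have hnorm : ∀ k, ‖a k • W k‖ ≤ a k := by
    intro k
    rw [norm_smul, Real.norm_of_nonneg (ha0 k)]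
    exact mul_le_of_le_one_right (ha0 k) (hWn k)
  have hsum : Summable (fun k => a k • W k) := Summable.of_norm_bounded hasum.summable hnorm
  obtain ⟨S, hS⟩ := hsum
  have hSn : ‖S‖ ≤ 1 := by
    rw [← hS.tsum_eq]
    exact tsum_of_norm_bounded hasum hnorm
  have hSf : ∀ f, HasSum (fun k => a k • W k f) (S f) := by
    intro f
    have := (ContinuousLinearMap.apply ℝ E f).hasSum hS
    simpa using this
  have hSge : ∀ s : Finset (Fin d → ℕ), PosOp (S - ∑ k ∈ s, a k • W k) := by
    intro s f hf
    rw [ContinuousLinearMap.sub_apply, sub_nonneg]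
    have := sum_le_hasSum s (fun k _ => smul_nonneg (ha0 k) (hWpos k f hf)) (hSf f)
    simpa [ContinuousLinearMap.sum_apply] using this
  have hSpos : PosOp S := by simpa using hSge ∅
  refine ⟨S, hS, ?_, hSpos, ?_⟩
  · intro f
    simpa using S.le_of_opNorm_le hSn f
  intro n hn f hf
  have hm0 : (0:ℝ) < m n := by exact_mod_cast hm n
  set box := Fintype.piFinset (fun _ : Fin d => Finset.range n) with hbox
  have hj : ∀ j, ∑ k ∈ box, (∏ i, pp α j (k i)) • W k f ≤ (S^j) f := by
    intro j
    have q1 := multi_dim' h0 h1 T hT hcm n j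
    have q2 := pow_diff_pos (PosOp.sum box fun k _ => (hWpos k).smul (ha0 k)) (hSge box) j
    have q3 := q2.add q1 f hf
    rw [← sub_nonneg]
    refine q3.trans (le_of_eq ?_)
    simp only [hW, ha, hbox, ContinuousLinearMap.add_apply, ContinuousLinearMap.sub_apply,
      ContinuousLinearMap.sum_apply, ContinuousLinearMap.smul_apply]
    abel
  have hsumj : ∑ k ∈ box, (c * (m n : ℝ) * ((n:ℝ)^d)⁻¹) • W k f ≤ ∑ j ∈ Finset.range (m n), (S^j) f := by
    refine le_trans ?_ (Finset.sum_le_sum fun j _ => hj j)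
    rw [Finset.sum_comm]
    apply Finset.sum_le_sum; intro k hk
    rw [← Finset.sum_smul, ← sub_nonneg, ← sub_smul]
    apply smul_nonneg _ (hWpos k f hf)
    rw [sub_nonneg]
    apply hcomb n hn k
    simpa [hbox, Fintype.mem_piFinset] using hk
  have := smul_le_smul_of_nonneg_left hsumj (show (0:ℝ) ≤ c⁻¹ / m n by positivity)
  refine le_trans (le_of_eq ?_) this
  rw [← Finset.smul_sum, smul_smul]
  congr 1
  field_simp

end Main

theorem brunel_operator (d : ℕ) :
    ∃ χ : ℝ, 0 < χ ∧ ∃ a : (Fin d → ℕ) → ℝ, (∀ k, 0 < a k) ∧ HasSum a 1 ∧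
    ∃ m : ℕ → ℕ, (∀ n, 0 < m n) ∧
    ∀ (Ω : Type) (_ : MeasurableSpace Ω) (μ : Measure Ω), SigmaFinite μ →
    ∀ T : Fin d → (Lp ℝ 1 μ) →L[ℝ] (Lp ℝ 1 μ),
      (∀ i (f : Lp ℝ 1 μ), ‖T i f‖ ≤ ‖f‖) →
      (∀ i (f : Lp ℝ 1 μ), 0 ≤ f → 0 ≤ T i f) →
      (∀ i j, Commute (T i) (T j)) →
      ∃ S : (Lp ℝ 1 μ) →L[ℝ] (Lp ℝ 1 μ),
        HasSum (fun k : Fin d → ℕ => a k • (List.ofFn fun i => T i ^ k i).prod) S ∧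
        (∀ f : Lp ℝ 1 μ, ‖S f‖ ≤ ‖f‖) ∧
        (∀ f : Lp ℝ 1 μ, 0 ≤ f → 0 ≤ S f) ∧
        ∀ n : ℕ, 1 ≤ n → ∀ f : Lp ℝ 1 μ, 0 ≤ f →
          ((n : ℝ) ^ d)⁻¹ •
              ∑ k ∈ Fintype.piFinset (fun _ : Fin d => Finset.range n),
                (List.ofFn fun i => T i ^ k i).prod f
            ≤ (χ / (m n : ℝ)) • ∑ j ∈ Finset.range (m n), (S ^ j) f := by
  obtain ⟨α, h0, h1, c, hc, m, hm, hcomb⟩ : ∃ α : ℝ, 0 < α ∧ α ≤ 1 ∧ ∃ c : ℝ, 0 < c ∧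
      ∃ m : ℕ → ℕ, (∀ n, 0 < m n) ∧ (∀ n : ℕ, 1 ≤ n → ∀ k : Fin d → ℕ, (∀ i, k i < n) →
      c * (m n : ℝ) * ((n:ℝ)^d)⁻¹ ≤ ∑ j ∈ Finset.range (m n), ∏ i, pp α j (k i)) := by
    rcases d with _ | d
    · refine ⟨1, one_pos, le_rfl, 1, one_pos, fun _ => 1, fun _ => one_pos, ?_⟩
      intro n _ k _
      simp
    · obtain ⟨c, hc, h⟩ := final_comb d _ rfl
      refine ⟨1 / ((d:ℝ)+2), by positivity, ?_, c, hc, mm _, fun n => by rw [mm]; omega, h⟩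
      rw [div_le_one (by positivity)]
      linarith [Nat.cast_nonneg (α := ℝ) d]
  refine ⟨c⁻¹, inv_pos.mpr hc, fun k => ∏ i, bb α (k i),
    fun k => Finset.prod_pos fun i _ => bb_pos h0 h1 _,
    hasSum_pi_prod (fun y => (bb_pos h0 h1 y).le) (bb_hasSum h0 h1) d, m, hm, ?_⟩
  intro Ω _ μ _ T hT1 hT hcm
  haveI : PosSMulMono ℝ (Lp ℝ 1 μ) := by
    refine ⟨fun c hc f g hfg => ?_⟩
    rw [← Lp.coeFn_le] at hfg ⊢
    filter_upwards [hfg, Lp.coeFn_smul c f, Lp.coeFn_smul c g] with x h1 h2 h3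
    rw [h2, h3]
    exact mul_le_mul_of_nonneg_left h1 hc
  exact brunel_abs d h0 h1 c hc m hm hcomb T hT1 hT hcm
end

section
/- Let (Ω, 𝒜, μ) be a σ-finite measure space and T a positive Dunford–Schwartz operator. Then for every f ∈ L¹(μ) with f ≥ 0 a.e. and every ν > 0 there exists a measurable set E ⊆ Ω such that μ(Ω∖E) ≤ ‖f‖₁/ν and sup_n ‖(A_n(f))·1_E‖_∞ ≤ ν, where A_n(f) = (1/n) ∑_{k=0}^{n−1} T^k f. -/
open MeasureTheory Filter Set ENNReal Topology

variable {Ω : Type*} [MeasurableSpace Ω]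

/-- `f` belongs to `L¹(μ) + L^∞(μ)`. -/
def MemL1pLinf (μ : Measure Ω) (f : Ω →ₘ[μ] ℝ) : Prop :=
  ∃ g h : Ω →ₘ[μ] ℝ, eLpNorm g 1 μ ≠ ∞ ∧ eLpNorm h ⊤ μ ≠ ∞ ∧ f = g + h

/-- A positive Dunford–Schwartz operator: linear and positive on `L¹+L^∞`,
contracting both the `L¹`- and `L^∞`-norms. -/
structure IsPosDS (μ : Measure Ω) (T : (Ω →ₘ[μ] ℝ) → (Ω →ₘ[μ] ℝ)) : Prop where
  map_add : ∀ f g, MemL1pLinf μ f → MemL1pLinf μ g → T (f + g) = T f + T g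
  map_smul : ∀ (c : ℝ) (f), MemL1pLinf μ f → T (c • f) = c • T f
  map_pos : ∀ f, MemL1pLinf μ f → 0 ≤ f → 0 ≤ T f
  norm_one : ∀ f, MemL1pLinf μ f → eLpNorm (T f) 1 μ ≤ eLpNorm f 1 μ
  norm_top : ∀ f, MemL1pLinf μ f → eLpNorm (T f) ⊤ μ ≤ eLpNorm f ⊤ μ

/-- The Cesàro averages `A_n(f) = (1/n) ∑_{k<n} T^k f`. -/
noncomputable def cesaro (μ : Measure Ω) (T : (Ω →ₘ[μ] ℝ) → (Ω →ₘ[μ] ℝ)) (n : ℕ)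
    (f : Ω →ₘ[μ] ℝ) : Ω →ₘ[μ] ℝ :=
  (n : ℝ)⁻¹ • ∑ k ∈ Finset.range n, T^[k] f

/-- Almost uniform convergence of a net `F` to `f`. -/
def AuTendsto {ι : Type*} (μ : Measure Ω) (l : Filter ι) (F : ι → Ω →ₘ[μ] ℝ)
    (f : Ω →ₘ[μ] ℝ) : Prop :=
  ∀ ε : ℝ, 0 < ε → ∃ E : Set Ω, MeasurableSet E ∧ μ Eᶜ ≤ ENNReal.ofReal ε ∧
    Tendsto (fun i => eLpNorm (E.indicator (⇑(F i - f))) ⊤ μ) l (𝓝 0)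

/-- `R_μ`: elements of `L¹+L^∞` whose distribution tails are finite. -/
def MemRmu (μ : Measure Ω) (f : Ω →ₘ[μ] ℝ) : Prop :=
  MemL1pLinf μ f ∧ ∀ lam : ℝ, 0 < lam → μ {ω | lam < |f ω|} < ∞

theorem ds_ex_real (μ : Measure Ω) (f : Ω →ₘ[μ] ℝ) (hf : eLpNorm f 1 μ ≠ ∞) : MemL1pLinf μ f := by
  refine ⟨f, 0, hf, ?_, by simp⟩
  rw [eLpNorm_congr_ae (AEEqFun.coeFn_zero (β := ℝ))]
  simp

theorem ds_add_L1 (μ : Measure Ω) (f g : Ω →ₘ[μ] ℝ) (hf : eLpNorm f 1 μ ≠ ∞)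
    (hg : eLpNorm g 1 μ ≠ ∞) : eLpNorm (f + g : Ω →ₘ[μ] ℝ) 1 μ ≠ ∞ := by
  rw [eLpNorm_congr_ae (AEEqFun.coeFn_add f g)]
  refine ne_top_of_le_ne_top (ENNReal.add_ne_top.2 ⟨hf, hg⟩)
    (eLpNorm_add_le f.aestronglyMeasurable g.aestronglyMeasurable le_rfl)

theorem ds_zero_L1 (μ : Measure Ω) : eLpNorm (0 : Ω →ₘ[μ] ℝ) 1 μ ≠ ∞ := by
  rw [eLpNorm_congr_ae (AEEqFun.coeFn_zero (β := ℝ))]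
  simp

theorem ds_smul_const (μ : Measure Ω) (r ν : ℝ) :
    r • (AEEqFun.const Ω ν : Ω →ₘ[μ] ℝ) = AEEqFun.const Ω (r * ν) := by
  apply AEEqFun.ext
  filter_upwards [AEEqFun.coeFn_smul r (AEEqFun.const Ω ν : Ω →ₘ[μ] ℝ),
    AEEqFun.coeFn_const (μ := μ) Ω ν, AEEqFun.coeFn_const (μ := μ) Ω (r * ν)] with x h1 h2 h3
  rw [h1, h3, Pi.smul_apply, h2]; simp

theorem ds_const_top (μ : Measure Ω) (ν : ℝ) :
    eLpNorm (AEEqFun.const Ω ν : Ω →ₘ[μ] ℝ) ⊤ μ ≤ ENNReal.ofReal |ν| := by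
  rw [eLpNorm_congr_ae (AEEqFun.coeFn_const Ω ν), eLpNorm_exponent_top]
  refine eLpNormEssSup_le_of_ae_bound (Eventually.of_forall fun x => ?_)
  simp

theorem ds_mem_L1_const (μ : Measure Ω) (g : Ω →ₘ[μ] ℝ) (hg : eLpNorm g 1 μ ≠ ∞) (ν : ℝ) :
    MemL1pLinf μ (g + AEEqFun.const Ω ν) :=
  ⟨g, AEEqFun.const Ω ν, hg, ne_top_of_le_ne_top ENNReal.ofReal_ne_top (ds_const_top μ ν), rfl⟩

theorem ds_mem_const (μ : Measure Ω) (ν : ℝ) :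
    MemL1pLinf μ (AEEqFun.const Ω ν) := by
  have := ds_mem_L1_const μ 0 (ds_zero_L1 μ) ν
  rwa [zero_add] at this

theorem ds_mem_sub (μ : Measure Ω) (g h : Ω →ₘ[μ] ℝ) (hg : MemL1pLinf μ g) (hh : MemL1pLinf μ h) :
    MemL1pLinf μ (g - h) := by
  obtain ⟨a, b, ha, hb, rfl⟩ := hg
  obtain ⟨c, d, hc, hd, rfl⟩ := hh
  refine ⟨a - c, b - d, ?_, ?_, by abel⟩
  · rw [eLpNorm_congr_ae (AEEqFun.coeFn_sub a c)]
    exact ne_top_of_le_ne_top (ENNReal.add_ne_top.2 ⟨ha, hc⟩)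
      (eLpNorm_sub_le a.aestronglyMeasurable c.aestronglyMeasurable le_rfl)
  · rw [eLpNorm_congr_ae (AEEqFun.coeFn_sub b d)]
    exact ne_top_of_le_ne_top (ENNReal.add_ne_top.2 ⟨hb, hd⟩)
      (eLpNorm_sub_le b.aestronglyMeasurable d.aestronglyMeasurable le_top)

theorem ds_mono (μ : Measure Ω) (T : (Ω →ₘ[μ] ℝ) → (Ω →ₘ[μ] ℝ)) (hT : IsPosDS μ T)
    (g h : Ω →ₘ[μ] ℝ) (hg : MemL1pLinf μ g) (hh : MemL1pLinf μ h) (hle : g ≤ h) :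
    T g ≤ T h := by
  have h1 : T h = T g + T (h - g) := by
    rw [← hT.map_add g (h - g) hg (ds_mem_sub μ h g hh hg)]; congr 1; abel
  have h0 : (0 : Ω →ₘ[μ] ℝ) ≤ h - g := by
    rw [← AEEqFun.coeFn_le] at hle ⊢
    filter_upwards [hle, AEEqFun.coeFn_sub h g, AEEqFun.coeFn_zero (μ := μ) (α := Ω) (β := ℝ)]
      with x h1 h2 h3
    rw [h2, h3]; simpa using h1
  have h2 := hT.map_pos _ (ds_mem_sub μ h g hh hg) h0
  rw [h1]
  rw [← AEEqFun.coeFn_le] at h2 ⊢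
  filter_upwards [h2, AEEqFun.coeFn_add (T g) (T (h - g)),
    AEEqFun.coeFn_zero (μ := μ) (α := Ω) (β := ℝ)] with x h4 h5 h6
  rw [h5]; rw [h6] at h4; simpa using h4

theorem ds_T_const (μ : Measure Ω) (T : (Ω →ₘ[μ] ℝ) → (Ω →ₘ[μ] ℝ)) (hT : IsPosDS μ T)
    (ν : ℝ) (hν : 0 ≤ ν) : ∀ᵐ x ∂μ, T (AEEqFun.const Ω ν) x ≤ ν := by
  have h := (hT.norm_top _ (ds_mem_const μ ν)).trans (ds_const_top μ ν)
  rw [eLpNorm_exponent_top] at h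
  filter_upwards [ae_le_eLpNormEssSup (f := T (AEEqFun.const Ω ν)) (μ := μ)] with x hx
  have h2 := hx.trans h
  rw [Real.enorm_eq_ofReal_abs, ENNReal.ofReal_le_ofReal_iff (abs_nonneg _), abs_of_nonneg hν] at h2
  exact (le_abs_self _).trans h2

/-- the auxiliary sequence -/
noncomputable def dsM (μ : Measure Ω) (T : (Ω →ₘ[μ] ℝ) → (Ω →ₘ[μ] ℝ)) (f : Ω →ₘ[μ] ℝ) (ν : ℝ) :
    ℕ → (Ω →ₘ[μ] ℝ)
  | 0 => 0
  | n + 1 => (f + T (dsM μ T f ν n) - AEEqFun.const Ω ν) ⊔ 0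

theorem dsM_succ_ae (μ : Measure Ω) (T : (Ω →ₘ[μ] ℝ) → (Ω →ₘ[μ] ℝ)) (f : Ω →ₘ[μ] ℝ) (ν : ℝ)
    (n : ℕ) : ∀ᵐ x ∂μ, dsM μ T f ν (n + 1) x = max (f x + T (dsM μ T f ν n) x - ν) 0 := by
  rw [dsM]
  filter_upwards [AEEqFun.coeFn_sup (f + T (dsM μ T f ν n) - AEEqFun.const Ω ν) 0,
    AEEqFun.coeFn_sub (f + T (dsM μ T f ν n)) (AEEqFun.const Ω ν),
    AEEqFun.coeFn_add f (T (dsM μ T f ν n)), AEEqFun.coeFn_const (μ := μ) Ω ν,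
    AEEqFun.coeFn_zero (μ := μ) (α := Ω) (β := ℝ)] with x h1 h2 h3 h4 h5
  rw [h1, h2, Pi.sub_apply, h3, Pi.add_apply, h4, h5]; simp

theorem ds_nonneg_ae (μ : Measure Ω) (f : Ω →ₘ[μ] ℝ) : 0 ≤ f ↔ ∀ᵐ x ∂μ, 0 ≤ f x := by
  rw [← AEEqFun.coeFn_le]
  have h := AEEqFun.coeFn_zero (μ := μ) (α := Ω) (β := ℝ)
  constructor <;> intro h1 <;> filter_upwards [h, h1] with x h2 h3
  · rw [h2] at h3; simpa using h3
  · rw [h2]; simpa using h3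

theorem dsM_nonneg (μ : Measure Ω) (T : (Ω →ₘ[μ] ℝ) → (Ω →ₘ[μ] ℝ)) (f : Ω →ₘ[μ] ℝ) (ν : ℝ)
    (n : ℕ) : 0 ≤ dsM μ T f ν n := by
  cases n with
  | zero => exact le_rfl
  | succ n => rw [dsM]; exact le_sup_right

theorem dsM_L1 (μ : Measure Ω) (T : (Ω →ₘ[μ] ℝ) → (Ω →ₘ[μ] ℝ)) (hT : IsPosDS μ T)
    (f : Ω →ₘ[μ] ℝ) (hf1 : eLpNorm f 1 μ ≠ ∞) (hfpos : 0 ≤ f)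
    (ν : ℝ) (hν : 0 < ν) (n : ℕ) : eLpNorm (dsM μ T f ν n) 1 μ ≠ ∞ := by
  induction n with
  | zero => exact ds_zero_L1 μ
  | succ n ih =>
    have hm := ds_ex_real μ _ ih
    have hT1 := ne_top_of_le_ne_top ih (hT.norm_one _ hm)
    have hp := hT.map_pos _ hm (dsM_nonneg μ T f ν n)
    refine ne_top_of_le_ne_top (ds_add_L1 μ f _ hf1 hT1) (eLpNorm_mono_ae ?_)
    rw [ds_nonneg_ae] at hp hfpos
    filter_upwards [hp, hfpos, dsM_succ_ae μ T f ν n, AEEqFun.coeFn_add f (T (dsM μ T f ν n))]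
      with x h1 h2 h3 h4
    rw [h3, h4, Pi.add_apply, Real.norm_of_nonneg (le_max_right _ _),
      Real.norm_of_nonneg (by positivity)]
    exact max_le (by linarith) (by positivity)

theorem dsM_mono (μ : Measure Ω) (T : (Ω →ₘ[μ] ℝ) → (Ω →ₘ[μ] ℝ)) (hT : IsPosDS μ T)
    (f : Ω →ₘ[μ] ℝ) (hf1 : eLpNorm f 1 μ ≠ ∞) (hfpos : 0 ≤ f)
    (ν : ℝ) (hν : 0 < ν) (n : ℕ) : dsM μ T f ν n ≤ dsM μ T f ν (n + 1) := by
  induction n with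
  | zero => exact dsM_nonneg μ T f ν 1
  | succ n ih =>
    have h := ds_mono μ T hT _ _ (ds_ex_real μ _ (dsM_L1 μ T hT f hf1 hfpos ν hν n))
      (ds_ex_real μ _ (dsM_L1 μ T hT f hf1 hfpos ν hν (n + 1))) ih
    rw [← AEEqFun.coeFn_le] at h ⊢
    filter_upwards [h, dsM_succ_ae μ T f ν n, dsM_succ_ae μ T f ν (n + 1)] with x h1 h2 h3
    rw [h2, h3]
    exact max_le_max (by linarith) le_rfl

theorem dsM_measure (μ : Measure Ω) (T : (Ω →ₘ[μ] ℝ) → (Ω →ₘ[μ] ℝ)) (hT : IsPosDS μ T)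
    (f : Ω →ₘ[μ] ℝ) (hf1 : eLpNorm f 1 μ ≠ ∞) (hfpos : 0 ≤ f)
    (ν : ℝ) (hν : 0 < ν) (n : ℕ) :
    μ {x | 0 < dsM μ T f ν (n + 1) x} ≤ eLpNorm f 1 μ / ENNReal.ofReal ν := by
  have hm := ds_ex_real μ _ (dsM_L1 μ T hT f hf1 hfpos ν hν n)
  have hL := dsM_L1 μ T hT f hf1 hfpos ν hν (n + 1)
  have hp := hT.map_pos _ hm (dsM_nonneg μ T f ν n)
  have hn := hT.norm_one _ hm
  have hmono : eLpNorm (dsM μ T f ν n) 1 μ ≤ eLpNorm (dsM μ T f ν (n + 1)) 1 μ := by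
    refine eLpNorm_mono_ae ?_
    have h0 := dsM_nonneg μ T f ν n
    have h := dsM_mono μ T hT f hf1 hfpos ν hν n
    rw [ds_nonneg_ae] at h0
    rw [← AEEqFun.coeFn_le] at h
    filter_upwards [h0, h] with x h1 h2
    rw [Real.norm_of_nonneg h1, Real.norm_of_nonneg (h1.trans h2)]; exact h2
  have hms : MeasurableSet {x | 0 < dsM μ T f ν (n + 1) x} :=
    measurableSet_lt measurable_const (AEEqFun.measurable _)
  have key : ENNReal.ofReal ν * μ {x | 0 < dsM μ T f ν (n + 1) x}
      + eLpNorm (dsM μ T f ν (n + 1)) 1 μ ≤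
      eLpNorm f 1 μ + eLpNorm (T (dsM μ T f ν n)) 1 μ := by
    simp only [eLpNorm_one_eq_lintegral_enorm]
    rw [← lintegral_indicator_const hms, ← lintegral_add_left (measurable_const.indicator hms),
      ← lintegral_add_left (AEEqFun.measurable f).enorm]
    refine lintegral_mono_ae ?_
    rw [ds_nonneg_ae] at hp hfpos
    filter_upwards [hp, hfpos, dsM_succ_ae μ T f ν n] with x h1 h2 h3
    have h4 : 0 ≤ dsM μ T f ν (n + 1) x := by rw [h3]; exact le_max_right _ _
    rw [Real.enorm_of_nonneg h1, Real.enorm_of_nonneg h2, Real.enorm_of_nonneg h4,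
      ← ENNReal.ofReal_add h2 h1]
    by_cases hx : 0 < dsM μ T f ν (n + 1) x
    · rw [Set.indicator_of_mem (by exact hx), ← ENNReal.ofReal_add hν.le h4]
      apply ENNReal.ofReal_le_ofReal
      rw [h3] at hx ⊢
      rcases lt_max_iff.1 hx with h | h
      · rw [max_eq_left h.le]; linarith
      · exact absurd h (lt_irrefl _)
    · rw [Set.indicator_of_notMem (by exact hx), le_antisymm (not_lt.1 hx) h4]
      simp
  rw [ENNReal.le_div_iff_mul_le (Or.inl (by simpa using hν)) (Or.inl ENNReal.ofReal_ne_top), mul_comm]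
  refine (ENNReal.add_le_add_iff_right hL).1 (key.trans ?_)
  gcongr
  exact hn.trans hmono

theorem ds_sum (μ : Measure Ω) (T : (Ω →ₘ[μ] ℝ) → (Ω →ₘ[μ] ℝ)) (hT : IsPosDS μ T)
    (f : Ω →ₘ[μ] ℝ) (hf1 : eLpNorm f 1 μ ≠ ∞) (hfpos : 0 ≤ f) (n : ℕ) :
    eLpNorm (T^[n] f) 1 μ ≠ ∞ ∧ 0 ≤ T^[n] f ∧
    eLpNorm (∑ k ∈ Finset.range n, T^[k] f : Ω →ₘ[μ] ℝ) 1 μ ≠ ∞ ∧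
    0 ≤ ∑ k ∈ Finset.range n, T^[k] f ∧
    ∑ k ∈ Finset.range (n + 1), T^[k] f = f + T (∑ k ∈ Finset.range n, T^[k] f) := by
  induction n with
  | zero =>
    refine ⟨hf1, hfpos, ds_zero_L1 μ, by simp, ?_⟩
    have := hT.map_smul 0 0 (ds_ex_real μ _ (ds_zero_L1 μ))
    simp only [zero_smul] at this
    simp [this]
  | succ n ih =>
    obtain ⟨h1, h2, h3, h4, h5⟩ := ih
    have hs : eLpNorm (∑ k ∈ Finset.range (n + 1), T^[k] f : Ω →ₘ[μ] ℝ) 1 μ ≠ ∞ := by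
      rw [Finset.sum_range_succ]; exact ds_add_L1 μ _ _ h3 h1
    refine ⟨?_, ?_, hs, ?_, ?_⟩
    · rw [Function.iterate_succ_apply']
      exact ne_top_of_le_ne_top h1 (hT.norm_one _ (ds_ex_real μ _ h1))
    · rw [Function.iterate_succ_apply']
      exact hT.map_pos _ (ds_ex_real μ _ h1) h2
    · rw [Finset.sum_range_succ]
      rw [ds_nonneg_ae] at h2 h4 ⊢
      filter_upwards [h2, h4, AEEqFun.coeFn_add (∑ k ∈ Finset.range n, T^[k] f) (T^[n] f)]
        with x a b c
      rw [c]; exact add_nonneg b a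
    · have h6 : T (∑ k ∈ Finset.range (n + 1), T^[k] f) =
          T (∑ k ∈ Finset.range n, T^[k] f) + T (T^[n] f) := by
        rw [Finset.sum_range_succ, hT.map_add _ _ (ds_ex_real μ _ h3) (ds_ex_real μ _ h1)]
      rw [h6, Finset.sum_range_succ, h5, Function.iterate_succ_apply', add_assoc]

theorem ds_compare (μ : Measure Ω) (T : (Ω →ₘ[μ] ℝ) → (Ω →ₘ[μ] ℝ)) (hT : IsPosDS μ T)
    (f : Ω →ₘ[μ] ℝ) (hf1 : eLpNorm f 1 μ ≠ ∞) (hfpos : 0 ≤ f)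
    (ν : ℝ) (hν : 0 < ν) (n : ℕ) :
    ∀ᵐ x ∂μ, (∑ k ∈ Finset.range n, T^[k] f : Ω →ₘ[μ] ℝ) x ≤ dsM μ T f ν n x + n * ν := by
  induction n with
  | zero =>
    simp [dsM]
  | succ n ih =>
    obtain ⟨h1, h2, h3, h4, h5⟩ := ds_sum μ T hT f hf1 hfpos n
    have hL := dsM_L1 μ T hT f hf1 hfpos ν hν n
    have hle : (∑ k ∈ Finset.range n, T^[k] f : Ω →ₘ[μ] ℝ) ≤
        dsM μ T f ν n + AEEqFun.const Ω (n * ν) := by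
      rw [← AEEqFun.coeFn_le]
      filter_upwards [ih, AEEqFun.coeFn_add (dsM μ T f ν n) (AEEqFun.const Ω (n * ν)),
        AEEqFun.coeFn_const (μ := μ) Ω (n * ν)] with x a b c
      rw [b, Pi.add_apply, c]; exact a
    have h6 := ds_mono μ T hT _ _ (ds_ex_real μ _ h3) (ds_mem_L1_const μ _ hL _) hle
    rw [hT.map_add _ _ (ds_ex_real μ _ hL) (ds_mem_const μ _), ← AEEqFun.coeFn_le] at h6
    rw [h5]
    filter_upwards [h6, ds_T_const μ T hT (n * ν) (by positivity), dsM_succ_ae μ T f ν n,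
      AEEqFun.coeFn_add f (T (∑ k ∈ Finset.range n, T^[k] f)),
      AEEqFun.coeFn_add (T (dsM μ T f ν n)) (T (AEEqFun.const Ω (n * ν)))] with x a b c d e
    rw [d, c, Pi.add_apply]
    rw [e, Pi.add_apply] at a
    have := le_max_left (f x + T (dsM μ T f ν n) x - ν) 0
    push_cast
    linarith

theorem maximal_ergodic_inequality (μ : Measure Ω) [SigmaFinite μ]
    (T : (Ω →ₘ[μ] ℝ) → (Ω →ₘ[μ] ℝ)) (hT : IsPosDS μ T)
    (f : Ω →ₘ[μ] ℝ) (hf1 : eLpNorm f 1 μ ≠ ∞) (hfpos : 0 ≤ f)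
    (ν : ℝ) (hν : 0 < ν) :
    ∃ E : Set Ω, MeasurableSet E ∧ μ Eᶜ ≤ eLpNorm f 1 μ / ENNReal.ofReal ν ∧
      ∀ n : ℕ, eLpNorm (E.indicator ⇑(cesaro μ T n f)) ⊤ μ ≤ ENNReal.ofReal ν := by
  have hms : ∀ n, MeasurableSet {x | 0 < dsM μ T f ν n x} := fun n =>
    measurableSet_lt measurable_const (AEEqFun.measurable _)
  refine ⟨(⋃ n, {x | 0 < dsM μ T f ν n x})ᶜ, (MeasurableSet.iUnion hms).compl, ?_, fun n => ?_⟩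
  · rw [compl_compl]
    have hae : ∀ᵐ x ∂μ, Monotone fun n => dsM μ T f ν n x := by
      have : ∀ᵐ x ∂μ, ∀ n, dsM μ T f ν n x ≤ dsM μ T f ν (n + 1) x :=
        ae_all_iff.2 fun n => AEEqFun.coeFn_le.2 (dsM_mono μ T hT f hf1 hfpos ν hν n)
      filter_upwards [this] with x hx using monotone_nat_of_le_succ hx
    rw [measure_iUnion_eq_iSup_accumulate]
    refine iSup_le fun n => le_trans (measure_mono_ae ?_) (dsM_measure μ T hT f hf1 hfpos ν hν n)
    filter_upwards [hae] with x hx hx2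
    obtain ⟨k, hk, hxk⟩ := Set.mem_accumulate.1 hx2
    exact lt_of_lt_of_le hxk (hx (hk.trans n.le_succ))
  · rw [eLpNorm_exponent_top]
    refine eLpNormEssSup_le_of_ae_bound ?_
    obtain ⟨h1, h2, h3, h4, h5⟩ := ds_sum μ T hT f hf1 hfpos n
    rw [ds_nonneg_ae] at h4
    filter_upwards [h4, ds_compare μ T hT f hf1 hfpos ν hν n,
      AEEqFun.coeFn_smul (n : ℝ)⁻¹ (∑ k ∈ Finset.range n, T^[k] f)] with x a b c
    by_cases hx : x ∈ (⋃ n, {x | 0 < dsM μ T f ν n x})ᶜ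
    · rw [Set.indicator_of_mem hx, cesaro, c, Pi.smul_apply, smul_eq_mul,
        Real.norm_of_nonneg (by positivity)]
      have h6 : dsM μ T f ν n x ≤ 0 := by
        by_contra h
        exact hx (Set.mem_iUnion.2 ⟨n, not_le.1 h⟩)
      rcases Nat.eq_zero_or_pos n with rfl | hn
      · simpa using hν.le
      · have hn' : (0 : ℝ) < n := by exact_mod_cast hn
        rw [inv_mul_le_iff₀ hn']
        linarith
    · rw [Set.indicator_of_notMem hx]; simpa using hν.le
end
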